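/- Let N ≥ 1, M ≥ 2, Δt, Δx, Δy, Δz > 0, μ ∈ ℝ, β, γ ≥ 0, J ∈ ℝ, and let V : ℝ → ℝ. Let u^k_{m,n,p} ∈ ℝ be given for k ∈ {0,…,M} and m,n,p ∈ {0,…,N+1}, satisfying for all k ∈ {1,…,M−1} and m,n,p ∈ {1,…,N} the finite-difference scheme in the form multiplied through by δₜu^k_{m,n,p}: [δ²ₜu^k_{m,n,p}/(Δt)² − (δ²ₓ/(Δx)² + δ²ᵧ/(Δy)² + δ²_z/(Δz)²)(u^k_{m,n,p} + (β/(2Δt))·δₜu^k_{m,n,p}) + γ·δₜu^k_{m,n,p}/(2Δt) + (μ/2)·(u^{k+1}_{m,n,p} + u^{k−1}_{m,n,p})]·δₜu^k_{m,n,p} + V(u^{k+1}_{m,n,p}) − V(u^{k−1}_{m,n,p}) − J·δₜu^k_{m,n,p} = 0, together with the discrete Neumann conditions u^k_{N+1,n,p} = u^k_{N,n,p}, u^k_{m,N+1,p} = u^k_{m,N,p}, u^k_{m,n,N+1} = u^k_{m,n,N} for all k and all m,n,p ∈ {1,…,N}. Then for every k ∈ {1,…,M−1}, (E^k − E^{k−1})/Δt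 = {−∑_{i,j=1}^N [(δₓu^k_{0,i,j}/(Δx)²)·(δₜu^k_{0,i,j}/(2Δt)) + (δᵧu^k_{i,0,j}/(Δy)²)·(δₜu^k_{i,0,j}/(2Δt)) + (δ_zu^k_{i,j,0}/(Δz)²)·(δₜu^k_{i,j,0}/(2Δt))] − β·{∑_{m,n,p=1}^N [(δₜₓu^k_{m−1,n,p}/(2ΔxΔt))² + (δₜᵧu^k_{m,n−1,p}/(2ΔyΔt))² + (δₜ_zu^k_{m,n,p−1}/(2ΔzΔt))²] + ∑_{i,j=1}^N [(δₜₓu^k_{0,i,j})·(δₜu^k_{0,i,j})/(2ΔxΔt)² + (δₜᵧu^k_{i,0,j})·(δₜu^k_{i,0,j})/(2ΔyΔt)² + (δₜ_zu^k_{i,j,0})·(δₜu^k_{i,j,0})/(2ΔzΔt)²]} − γ·∑_{m,n,p=1}^N (δₜu^k_{m,n,p}/(2Δt))²}·Δυ. -/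

import Mathlib

noncomputable section

open Finset

/-- δₜu^k = u^{k+1} − u^{k−1}. -/
def dT (u : ℕ → ℤ → ℤ → ℤ → ℝ) (k : ℕ) (m n p : ℤ) : ℝ :=
  u (k + 1) m n p - u (k - 1) m n p

/-- δ²ₜu^k = u^{k+1} − 2u^k + u^{k−1}. -/
def d2T (u : ℕ → ℤ → ℤ → ℤ → ℝ) (k : ℕ) (m n p : ℤ) : ℝ :=
  u (k + 1) m n p - 2 * u k m n p + u (k - 1) m n p

/-- Forward spatial differences. -/
def dX (u : ℕ → ℤ → ℤ → ℤ → ℝ) (k : ℕ) (m n p : ℤ) : ℝ := u k (m + 1) n p - u k m n p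
def dY (u : ℕ → ℤ → ℤ → ℤ → ℝ) (k : ℕ) (m n p : ℤ) : ℝ := u k m (n + 1) p - u k m n p
def dZ (u : ℕ → ℤ → ℤ → ℤ → ℝ) (k : ℕ) (m n p : ℤ) : ℝ := u k m n (p + 1) - u k m n p

/-- Centered second spatial differences. -/
def d2X (u : ℕ → ℤ → ℤ → ℤ → ℝ) (k : ℕ) (m n p : ℤ) : ℝ :=
  u k (m + 1) n p - 2 * u k m n p + u k (m - 1) n p
def d2Y (u : ℕ → ℤ → ℤ → ℤ → ℝ) (k : ℕ) (m n p : ℤ) : ℝ :=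
  u k m (n + 1) p - 2 * u k m n p + u k m (n - 1) p
def d2Z (u : ℕ → ℤ → ℤ → ℤ → ℝ) (k : ℕ) (m n p : ℤ) : ℝ :=
  u k m n (p + 1) - 2 * u k m n p + u k m n (p - 1)

/-- Mixed differences δₜₓ = δₓδₜ, δₜᵧ = δᵧδₜ, δₜ_z = δ_zδₜ. -/
def dTX (u : ℕ → ℤ → ℤ → ℤ → ℝ) (k : ℕ) (m n p : ℤ) : ℝ :=
  dT u k (m + 1) n p - dT u k m n p
def dTY (u : ℕ → ℤ → ℤ → ℤ → ℝ) (k : ℕ) (m n p : ℤ) : ℝ :=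
  dT u k m (n + 1) p - dT u k m n p
def dTZ (u : ℕ → ℤ → ℤ → ℤ → ℝ) (k : ℕ) (m n p : ℤ) : ℝ :=
  dT u k m n (p + 1) - dT u k m n p

/-- The field `u^k + (β/(2Δt))·δₜu^k` to which the spatial operator is applied. -/
def combField (β Δt : ℝ) (u : ℕ → ℤ → ℤ → ℤ → ℝ) : ℕ → ℤ → ℤ → ℤ → ℝ :=
  fun k m n p => u k m n p + β / (2 * Δt) * dT u k m n p

/-- The discrete node Hamiltonian `H^k_{m,n,p}`. -/
def nodeHd (Δt Δx Δy Δz μ J : ℝ) (V : ℝ → ℝ) (u : ℕ → ℤ → ℤ → ℤ → ℝ)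
    (k : ℕ) (m n p : ℤ) : ℝ :=
  (1:ℝ)/2 * ((u (k + 1) m n p - u k m n p) / Δt) ^ 2
    + (1:ℝ)/2 * (dX u (k + 1) m n p * dX u k m n p / Δx ^ 2
        + dY u (k + 1) m n p * dY u k m n p / Δy ^ 2
        + dZ u (k + 1) m n p * dZ u k m n p / Δz ^ 2)
    + μ / 2 * (((u (k + 1) m n p) ^ 2 + (u k m n p) ^ 2) / 2)
    + (V (u (k + 1) m n p) + V (u k m n p)) / 2
    - J * (u (k + 1) m n p + u k m n p) / 2

/-- The total discrete energy `E^k`. -/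
def totEd (N : ℕ) (Δt Δx Δy Δz μ J : ℝ) (V : ℝ → ℝ) (u : ℕ → ℤ → ℤ → ℤ → ℝ)
    (k : ℕ) : ℝ :=
  (∑ m ∈ Icc (1:ℤ) (N:ℤ), ∑ n ∈ Icc (1:ℤ) (N:ℤ), ∑ p ∈ Icc (1:ℤ) (N:ℤ),
      nodeHd Δt Δx Δy Δz μ J V u k m n p) * (Δx * Δy * Δz)
    + (1:ℝ)/2 * (∑ i ∈ Icc (1:ℤ) (N:ℤ), ∑ j ∈ Icc (1:ℤ) (N:ℤ),
        (dX u (k + 1) 0 i j * dX u k 0 i j / Δx ^ 2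
          + dY u (k + 1) i 0 j * dY u k i 0 j / Δy ^ 2
          + dZ u (k + 1) i j 0 * dZ u k i j 0 / Δz ^ 2)) * (Δx * Δy * Δz)

/-!
Put `v = δₜu / (2Δt)`, so that the field under the spatial operator is `u + β v`, and multiply the
scheme by `v`. The kinetic, potential and source terms become differences in time of their energies
at once. For the rest, Green's first identity turns `-(Δ_h u) v` and `-(Δ_h v) v` into the gradient
products `∇u · ∇v` and `|∇v|²`, up to fluxes through the near faces, and
`δu^k · δ(u^{k+1} - u^{k-1})` is again a difference in time. Green's identity produces backward
differences, whereas the Hamiltonian has forward ones; under the Neumann conditions the face terms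
of `totEd` make up exactly for this shift.
-/

section DivergenceTheorem

variable {A : Type*} [AddCommGroup A]

theorem sum_Icc_sub_pred (f : ℤ → A) (N : ℕ) :
    ∑ m ∈ Icc (1 : ℤ) N, (f m - f (m - 1)) = f N - f 0 := by
  induction N with
  | zero => simp
  | succ N ih =>
    rw [Nat.cast_succ, ← insert_Icc_right_eq_Icc_add_one (by omega), sum_insert (by simp), ih,
      add_sub_cancel_right, sub_add_sub_cancel]

theorem sum_cube_divergence (N : ℕ) (F G H : ℤ → ℤ → ℤ → A) :
    ∑ m ∈ Icc (1 : ℤ) N, ∑ n ∈ Icc (1 : ℤ) N, ∑ p ∈ Icc (1 : ℤ) N,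
        ((F m n p - F (m - 1) n p) + (G m n p - G m (n - 1) p) + (H m n p - H m n (p - 1)))
      = ∑ i ∈ Icc (1 : ℤ) N, ∑ j ∈ Icc (1 : ℤ) N, (F N i j + G i N j + H i j N)
        - ∑ i ∈ Icc (1 : ℤ) N, ∑ j ∈ Icc (1 : ℤ) N, (F 0 i j + G i 0 j + H i j 0) := by
  have x_faces := sum_Icc_sub_pred
    (fun m => ∑ n ∈ Icc (1 : ℤ) N, ∑ p ∈ Icc (1 : ℤ) N, F m n p) N
  have y_faces (m : ℤ) := sum_Icc_sub_pred (fun n => ∑ p ∈ Icc (1 : ℤ) N, G m n p) N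
  have z_faces (m n : ℤ) := sum_Icc_sub_pred (H m n) N
  simp only [sum_sub_distrib] at x_faces y_faces z_faces
  simp only [sum_add_distrib, sum_sub_distrib, x_faces, y_faces, z_faces]
  abel

/-- The discrete homogeneous Neumann condition on the three far faces of the cube. -/
def FarNeumann {α : Type*} (N : ℕ) (f : ℤ → ℤ → ℤ → α) : Prop :=
  ∀ m n p : ℤ, m ∈ Icc (1 : ℤ) N → n ∈ Icc (1 : ℤ) N → p ∈ Icc (1 : ℤ) N →
    f (N + 1) n p = f N n p ∧ f m (N + 1) p = f m N p ∧ f m n (N + 1) = f m n N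

theorem FarNeumann.sum_cube_divergence_eq_neg {α : Type*} {N : ℕ} {f : ℤ → ℤ → ℤ → α}
    (hf : FarNeumann N f) (F G H : ℤ → ℤ → ℤ → A)
    (hF : ∀ i j, f (N + 1) i j = f N i j → F N i j = 0)
    (hG : ∀ i j, f i (N + 1) j = f i N j → G i N j = 0)
    (hH : ∀ i j, f i j (N + 1) = f i j N → H i j N = 0) :
    ∑ m ∈ Icc (1 : ℤ) N, ∑ n ∈ Icc (1 : ℤ) N, ∑ p ∈ Icc (1 : ℤ) N,
        ((F m n p - F (m - 1) n p) + (G m n p - G m (n - 1) p) + (H m n p - H m n (p - 1)))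
      = -∑ i ∈ Icc (1 : ℤ) N, ∑ j ∈ Icc (1 : ℤ) N, (F 0 i j + G i 0 j + H i j 0) := by
  rw [sum_cube_divergence, sum_eq_zero, zero_sub]
  refine fun i hi => sum_eq_zero fun j hj => ?_
  rw [hF i j (hf i i j hi hi hj).1, hG i j (hf i i j hi hi hj).2.1,
    hH i j (hf i j j hi hj hj).2.2, add_zero, add_zero]

end DivergenceTheorem

section Green

variable {K : Type*} [Field K]

/-- The seven-point Laplacian of a grid function. -/
def discreteLaplacian (Δx Δy Δz : K) (f : ℤ → ℤ → ℤ → K) (m n p : ℤ) : K :=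
  (f (m + 1) n p - 2 * f m n p + f (m - 1) n p) / Δx ^ 2
    + (f m (n + 1) p - 2 * f m n p + f m (n - 1) p) / Δy ^ 2
    + (f m n (p + 1) - 2 * f m n p + f m n (p - 1)) / Δz ^ 2

/-- The discrete `∇f · ∇g` at a node, formed with backward differences as Green's identity
requires. -/
def gradInner (Δx Δy Δz : K) (f g : ℤ → ℤ → ℤ → K) (m n p : ℤ) : K :=
  (f m n p - f (m - 1) n p) * (g m n p - g (m - 1) n p) / Δx ^ 2
    + (f m n p - f m (n - 1) p) * (g m n p - g m (n - 1) p) / Δy ^ 2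
    + (f m n p - f m n (p - 1)) * (g m n p - g m n (p - 1)) / Δz ^ 2

/-- The discrete surface integral of `(∂f/∂ν) g` over the three near faces of the cube, with `ν`
the inward normal. Dividing by `Δx ^ 2` rather than `Δx` leaves the volume `Δx * Δy * Δz` as the
weight of every sum. -/
def nearFaceFlux (N : ℕ) (Δx Δy Δz : K) (f g : ℤ → ℤ → ℤ → K) : K :=
  ∑ i ∈ Icc (1 : ℤ) N, ∑ j ∈ Icc (1 : ℤ) N,
    ((f 1 i j - f 0 i j) / Δx ^ 2 * g 0 i j
      + (f i 1 j - f i 0 j) / Δy ^ 2 * g i 0 j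
      + (f i j 1 - f i j 0) / Δz ^ 2 * g i j 0)

theorem FarNeumann.sum_discreteLaplacian_mul {N : ℕ} {f : ℤ → ℤ → ℤ → K} (hf : FarNeumann N f)
    (Δx Δy Δz : K) (g : ℤ → ℤ → ℤ → K) :
    ∑ m ∈ Icc (1 : ℤ) N, ∑ n ∈ Icc (1 : ℤ) N, ∑ p ∈ Icc (1 : ℤ) N,
        discreteLaplacian Δx Δy Δz f m n p * g m n p
      = -(∑ m ∈ Icc (1 : ℤ) N, ∑ n ∈ Icc (1 : ℤ) N, ∑ p ∈ Icc (1 : ℤ) N,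
            gradInner Δx Δy Δz f g m n p
          + nearFaceFlux N Δx Δy Δz f g) := by
  have divergence := hf.sum_cube_divergence_eq_neg
    (fun m n p => (f (m + 1) n p - f m n p) / Δx ^ 2 * g m n p)
    (fun m n p => (f m (n + 1) p - f m n p) / Δy ^ 2 * g m n p)
    (fun m n p => (f m n (p + 1) - f m n p) / Δz ^ 2 * g m n p)
    (fun i j h => by simp [h]) (fun i j h => by simp [h]) (fun i j h => by simp [h])
  have leibniz (m n p : ℤ) :
      ((f (m + 1) n p - f m n p) / Δx ^ 2 * g m n p
            - (f (m - 1 + 1) n p - f (m - 1) n p) / Δx ^ 2 * g (m - 1) n p)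
          + ((f m (n + 1) p - f m n p) / Δy ^ 2 * g m n p
            - (f m (n - 1 + 1) p - f m (n - 1) p) / Δy ^ 2 * g m (n - 1) p)
          + ((f m n (p + 1) - f m n p) / Δz ^ 2 * g m n p
            - (f m n (p - 1 + 1) - f m n (p - 1)) / Δz ^ 2 * g m n (p - 1))
        = discreteLaplacian Δx Δy Δz f m n p * g m n p + gradInner Δx Δy Δz f g m n p := by
    simp only [discreteLaplacian, gradInner, sub_add_cancel]
    ring
  simp only [leibniz, sum_add_distrib, zero_add] at divergence
  simp only [nearFaceFlux, sum_add_distrib]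
  linear_combination divergence

end Green

section Scheme

/-- The centred difference quotient `δₜu^k / (2Δt)` of a field, which approximates `∂u/∂t`. -/
def velocity (Δt : ℝ) (u : ℕ → ℤ → ℤ → ℤ → ℝ) (k : ℕ) (m n p : ℤ) : ℝ :=
  dT u k m n p / (2 * Δt)

/-- The finite-difference scheme at time level `k`, multiplied by `δₜu^k`, on the interior nodes. -/
def SolvesSchemeAt (N : ℕ) (Δt Δx Δy Δz μ β γ J : ℝ) (V : ℝ → ℝ)
    (u : ℕ → ℤ → ℤ → ℤ → ℝ) (k : ℕ) : Prop :=
  ∀ m n p : ℤ, m ∈ Icc (1 : ℤ) N → n ∈ Icc (1 : ℤ) N → p ∈ Icc (1 : ℤ) N →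
    (d2T u k m n p / Δt ^ 2
        - discreteLaplacian Δx Δy Δz (combField β Δt u k) m n p
        + γ * dT u k m n p / (2 * Δt)
        + μ / 2 * (u (k + 1) m n p + u (k - 1) m n p)) * dT u k m n p
      + V (u (k + 1) m n p) - V (u (k - 1) m n p) - J * dT u k m n p = 0

/-- The node Hamiltonian with backward instead of forward space differences. Under the Neumann
conditions its sum over the nodes accounts for all of `totEd`, face terms included. -/
def backwardNodeHd (Δt Δx Δy Δz μ J : ℝ) (V : ℝ → ℝ) (u : ℕ → ℤ → ℤ → ℤ → ℝ)
    (k : ℕ) (m n p : ℤ) : ℝ :=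
  1 / 2 * ((u (k + 1) m n p - u k m n p) / Δt) ^ 2
    + 1 / 2 * gradInner Δx Δy Δz (u (k + 1)) (u k) m n p
    + μ / 2 * ((u (k + 1) m n p ^ 2 + u k m n p ^ 2) / 2)
    + (V (u (k + 1) m n p) + V (u k m n p)) / 2
    - J * (u (k + 1) m n p + u k m n p) / 2

variable {N k : ℕ} {Δt Δx Δy Δz μ β γ J : ℝ} {V : ℝ → ℝ} {u : ℕ → ℤ → ℤ → ℤ → ℝ}

theorem FarNeumann.velocity_succ (hprev : FarNeumann N (u k))
    (hnext : FarNeumann N (u (k + 1 + 1))) :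
    FarNeumann N (velocity Δt u (k + 1)) := by
  intro m n p hm hn hp
  obtain ⟨prev_x, prev_y, prev_z⟩ := hprev m n p hm hn hp
  obtain ⟨next_x, next_y, next_z⟩ := hnext m n p hm hn hp
  simp only [velocity, dT, Nat.add_sub_cancel, prev_x, prev_y, prev_z, next_x, next_y,
    next_z, and_self]

theorem totEd_eq_sum_backwardNodeHd (hneum : FarNeumann N (u k)) :
    totEd N Δt Δx Δy Δz μ J V u k
      = (∑ m ∈ Icc (1 : ℤ) N, ∑ n ∈ Icc (1 : ℤ) N, ∑ p ∈ Icc (1 : ℤ) N,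
          backwardNodeHd Δt Δx Δy Δz μ J V u k m n p) * (Δx * Δy * Δz) := by
  have divergence := hneum.sum_cube_divergence_eq_neg
    (fun m n p => 1 / 2 * (dX u (k + 1) m n p * dX u k m n p / Δx ^ 2))
    (fun m n p => 1 / 2 * (dY u (k + 1) m n p * dY u k m n p / Δy ^ 2))
    (fun m n p => 1 / 2 * (dZ u (k + 1) m n p * dZ u k m n p / Δz ^ 2))
    (fun i j h => by simp [dX, h]) (fun i j h => by simp [dY, h]) (fun i j h => by simp [dZ, h])
  have node_sub (m n p : ℤ) :
      (1 / 2 * (dX u (k + 1) m n p * dX u k m n p / Δx ^ 2)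
            - 1 / 2 * (dX u (k + 1) (m - 1) n p * dX u k (m - 1) n p / Δx ^ 2))
          + (1 / 2 * (dY u (k + 1) m n p * dY u k m n p / Δy ^ 2)
            - 1 / 2 * (dY u (k + 1) m (n - 1) p * dY u k m (n - 1) p / Δy ^ 2))
          + (1 / 2 * (dZ u (k + 1) m n p * dZ u k m n p / Δz ^ 2)
            - 1 / 2 * (dZ u (k + 1) m n (p - 1) * dZ u k m n (p - 1) / Δz ^ 2))
        = nodeHd Δt Δx Δy Δz μ J V u k m n p - backwardNodeHd Δt Δx Δy Δz μ J V u k m n p := by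
    simp only [nodeHd, backwardNodeHd, gradInner, dX, dY, dZ, sub_add_cancel]
    ring
  simp only [node_sub, sum_sub_distrib, ← mul_add, ← mul_sum] at divergence
  rw [totEd]
  linear_combination (Δx * Δy * Δz) * divergence

theorem gradInner_velocity (m n p : ℤ) :
    gradInner Δx Δy Δz (u (k + 1)) (velocity Δt u (k + 1)) m n p
      = (gradInner Δx Δy Δz (u (k + 1 + 1)) (u (k + 1)) m n p
          - gradInner Δx Δy Δz (u (k + 1)) (u k) m n p) / (2 * Δt) := by
  simp only [gradInner, velocity, dT, Nat.add_sub_cancel]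
  ring

theorem discreteLaplacian_combField (m n p : ℤ) :
    discreteLaplacian Δx Δy Δz (combField β Δt u k) m n p
      = discreteLaplacian Δx Δy Δz (u k) m n p
        + β * discreteLaplacian Δx Δy Δz (velocity Δt u k) m n p := by
  simp only [discreteLaplacian, combField, velocity]
  ring

theorem SolvesSchemeAt.backwardNodeHd_sub_div
    (hscheme : SolvesSchemeAt N Δt Δx Δy Δz μ β γ J V u (k + 1)) {m n p : ℤ}
    (hm : m ∈ Icc (1 : ℤ) N) (hn : n ∈ Icc (1 : ℤ) N) (hp : p ∈ Icc (1 : ℤ) N) :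
    (backwardNodeHd Δt Δx Δy Δz μ J V u (k + 1) m n p
        - backwardNodeHd Δt Δx Δy Δz μ J V u k m n p) / Δt
      = discreteLaplacian Δx Δy Δz (u (k + 1)) m n p * velocity Δt u (k + 1) m n p
        + gradInner Δx Δy Δz (u (k + 1)) (velocity Δt u (k + 1)) m n p
        + β * (discreteLaplacian Δx Δy Δz (velocity Δt u (k + 1)) m n p
            * velocity Δt u (k + 1) m n p)
        - γ * velocity Δt u (k + 1) m n p ^ 2 := by
  have scheme := hscheme m n p hm hn hp
  have kinetic :
      1 / 2 * ((u (k + 1 + 1) m n p - u (k + 1) m n p) / Δt) ^ 2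
          - 1 / 2 * ((u (k + 1) m n p - u k m n p) / Δt) ^ 2
        = d2T u (k + 1) m n p / Δt ^ 2 * dT u (k + 1) m n p / 2 := by
    simp only [d2T, dT, Nat.add_sub_cancel]
    ring
  have mass : u (k + 1 + 1) m n p ^ 2 - u k m n p ^ 2
      = (u (k + 1 + 1) m n p + u k m n p) * dT u (k + 1) m n p := sq_sub_sq _ _
  have source : u (k + 1 + 1) m n p - u k m n p = dT u (k + 1) m n p := rfl
  rw [discreteLaplacian_combField, Nat.add_sub_cancel] at scheme
  rw [gradInner_velocity]
  simp only [backwardNodeHd, velocity]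
  linear_combination scheme / (2 * Δt) + kinetic / Δt + μ / (4 * Δt) * mass
    - J / (2 * Δt) * source

theorem gradInner_velocity_self (m n p : ℤ) :
    gradInner Δx Δy Δz (velocity Δt u k) (velocity Δt u k) m n p
      = (dTX u k (m - 1) n p / (2 * Δx * Δt)) ^ 2 + (dTY u k m (n - 1) p / (2 * Δy * Δt)) ^ 2
        + (dTZ u k m n (p - 1) / (2 * Δz * Δt)) ^ 2 := by
  simp only [gradInner, velocity, dTX, dTY, dTZ, sub_add_cancel]
  ring

theorem nearFaceFlux_velocity_self :
    nearFaceFlux N Δx Δy Δz (velocity Δt u k) (velocity Δt u k)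
      = ∑ i ∈ Icc (1 : ℤ) N, ∑ j ∈ Icc (1 : ℤ) N,
          (dTX u k 0 i j * dT u k 0 i j / (2 * Δx * Δt) ^ 2
            + dTY u k i 0 j * dT u k i 0 j / (2 * Δy * Δt) ^ 2
            + dTZ u k i j 0 * dT u k i j 0 / (2 * Δz * Δt) ^ 2) := by
  refine sum_congr rfl fun i _ => sum_congr rfl fun j _ => ?_
  simp only [velocity, dTX, dTY, dTZ, zero_add]
  ring

end Scheme

theorem discrete_energy_rate_general (N k : ℕ) (Δt Δx Δy Δz : ℝ)
    (_hΔt : Δt ≠ 0) (_hΔx : Δx ≠ 0) (_hΔy : Δy ≠ 0) (_hΔz : Δz ≠ 0)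
    (μ β γ J : ℝ) (V : ℝ → ℝ) (u : ℕ → ℤ → ℤ → ℤ → ℝ)
    (hscheme : SolvesSchemeAt N Δt Δx Δy Δz μ β γ J V u (k + 1))
    (hneum : ∀ l ∈ Icc k (k + 2), FarNeumann N (u l)) :
    (totEd N Δt Δx Δy Δz μ J V u (k + 1) - totEd N Δt Δx Δy Δz μ J V u k) / Δt
      = (-nearFaceFlux N Δx Δy Δz (u (k + 1)) (velocity Δt u (k + 1))
          - β * (∑ m ∈ Icc (1 : ℤ) N, ∑ n ∈ Icc (1 : ℤ) N, ∑ p ∈ Icc (1 : ℤ) N,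
                gradInner Δx Δy Δz (velocity Δt u (k + 1)) (velocity Δt u (k + 1)) m n p
              + nearFaceFlux N Δx Δy Δz (velocity Δt u (k + 1)) (velocity Δt u (k + 1)))
          - γ * ∑ m ∈ Icc (1 : ℤ) N, ∑ n ∈ Icc (1 : ℤ) N, ∑ p ∈ Icc (1 : ℤ) N,
              velocity Δt u (k + 1) m n p ^ 2)
        * (Δx * Δy * Δz) := by
  have neumann_k : FarNeumann N (u k) := hneum k (by simp)
  have neumann_succ : FarNeumann N (u (k + 1)) := hneum (k + 1) (by simp)
  have neumann_velocity : FarNeumann N (velocity Δt u (k + 1)) :=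
    neumann_k.velocity_succ (hneum (k + 2) (by simp))
  have balance := sum_congr rfl fun m hm => sum_congr rfl fun n hn => sum_congr rfl fun p hp =>
    hscheme.backwardNodeHd_sub_div hm hn hp
  simp only [sum_add_distrib, sum_sub_distrib, ← sum_div, ← mul_sum] at balance
  rw [neumann_succ.sum_discreteLaplacian_mul, neumann_velocity.sum_discreteLaplacian_mul] at balance
  rw [totEd_eq_sum_backwardNodeHd neumann_succ, totEd_eq_sum_backwardNodeHd neumann_k]
  linear_combination (Δx * Δy * Δz) * balance

/-- Discrete rate of change of energy of the finite-difference scheme with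
discrete Neumann conditions on the far boundaries. -/
theorem discrete_energy_rate
    (N M : ℕ) (hN : 1 ≤ N) (hM : 2 ≤ M)
    (Δt Δx Δy Δz : ℝ) (hΔt : 0 < Δt) (hΔx : 0 < Δx) (hΔy : 0 < Δy) (hΔz : 0 < Δz)
    (μ β γ J : ℝ) (hβ : 0 ≤ β) (hγ : 0 ≤ γ) (V : ℝ → ℝ)
    (u : ℕ → ℤ → ℤ → ℤ → ℝ)
    (hscheme : ∀ k : ℕ, 1 ≤ k → k ≤ M - 1 → ∀ m n p : ℤ,
      m ∈ Icc (1:ℤ) (N:ℤ) → n ∈ Icc (1:ℤ) (N:ℤ) → p ∈ Icc (1:ℤ) (N:ℤ) →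
      (d2T u k m n p / Δt ^ 2
          - (d2X (combField β Δt u) k m n p / Δx ^ 2
              + d2Y (combField β Δt u) k m n p / Δy ^ 2
              + d2Z (combField β Δt u) k m n p / Δz ^ 2)
          + γ * dT u k m n p / (2 * Δt)
          + μ / 2 * (u (k + 1) m n p + u (k - 1) m n p)) * dT u k m n p
        + V (u (k + 1) m n p) - V (u (k - 1) m n p) - J * dT u k m n p = 0)
    (hneum : ∀ k ≤ M, ∀ m n p : ℤ,
      m ∈ Icc (1:ℤ) (N:ℤ) → n ∈ Icc (1:ℤ) (N:ℤ) → p ∈ Icc (1:ℤ) (N:ℤ) →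
      u k ((N:ℤ) + 1) n p = u k (N:ℤ) n p
        ∧ u k m ((N:ℤ) + 1) p = u k m (N:ℤ) p
        ∧ u k m n ((N:ℤ) + 1) = u k m n (N:ℤ)) :
    ∀ k : ℕ, 1 ≤ k → k ≤ M - 1 →
      (totEd N Δt Δx Δy Δz μ J V u k - totEd N Δt Δx Δy Δz μ J V u (k - 1)) / Δt
        = (-(∑ i ∈ Icc (1:ℤ) (N:ℤ), ∑ j ∈ Icc (1:ℤ) (N:ℤ),
              (dX u k 0 i j / Δx ^ 2 * (dT u k 0 i j / (2 * Δt))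
                + dY u k i 0 j / Δy ^ 2 * (dT u k i 0 j / (2 * Δt))
                + dZ u k i j 0 / Δz ^ 2 * (dT u k i j 0 / (2 * Δt))))
            - β * ((∑ m ∈ Icc (1:ℤ) (N:ℤ), ∑ n ∈ Icc (1:ℤ) (N:ℤ),
                  ∑ p ∈ Icc (1:ℤ) (N:ℤ),
                    ((dTX u k (m - 1) n p / (2 * Δx * Δt)) ^ 2
                      + (dTY u k m (n - 1) p / (2 * Δy * Δt)) ^ 2
                      + (dTZ u k m n (p - 1) / (2 * Δz * Δt)) ^ 2))
                + (∑ i ∈ Icc (1:ℤ) (N:ℤ), ∑ j ∈ Icc (1:ℤ) (N:ℤ),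
                    (dTX u k 0 i j * dT u k 0 i j / (2 * Δx * Δt) ^ 2
                      + dTY u k i 0 j * dT u k i 0 j / (2 * Δy * Δt) ^ 2
                      + dTZ u k i j 0 * dT u k i j 0 / (2 * Δz * Δt) ^ 2)))
            - γ * ∑ m ∈ Icc (1:ℤ) (N:ℤ), ∑ n ∈ Icc (1:ℤ) (N:ℤ),
                ∑ p ∈ Icc (1:ℤ) (N:ℤ), (dT u k m n p / (2 * Δt)) ^ 2)
          * (Δx * Δy * Δz) := by
  intro k hk hkM
  obtain ⟨k, rfl⟩ := Nat.exists_eq_add_of_le' hk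
  simp only [← gradInner_velocity_self, ← nearFaceFlux_velocity_self]
  exact discrete_energy_rate_general N k Δt Δx Δy Δz hΔt.ne' hΔx.ne' hΔy.ne' hΔz.ne' μ β γ J V u
    (hscheme (k + 1) hk hkM) fun l hl => hneum l (by rw [mem_Icc] at hl; omega)

end
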